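/- For every odd positive integer n, 16·T(1,2,7;n) = 3·N(1,2,7;8n+10) − N(1,2,7;4(8n+10)). -/

import Mathlib

/-!
Put `n = 2 * j + 1` and `M = 8 * j + 9`, so that `8 * n + 10 = 2 * M`.  Completing squares turns
`8 * T 1 2 7 n` into the number `O` of solutions of `x² + 2y² + 7z² = 2M` with all three entries odd
(`ncard_oddSol`).  Congruences modulo `8` show that every other solution of this equation has the
form `(2x, y, 2z)`; these correspond to the solutions of `2x² + y² + 14z² = M`, whose number is
`E`.  So `N (2M) = O + E` (`ncard_sol_two`).

In `x² + 2y² + 7z² = 8M`, either all entries are even, which gives back the solutions for `2M`, or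
`x, z` are odd and `y = 2w` is even.  In the second case exactly one of `4 ∣ x + z`, `4 ∣ x - z`
holds, and `z ↦ -z` exchanges the two possibilities.  So `N (8M) = N (2M) + 2P` with `P` the number
of `(x, w, z)`, `x, z` odd, `4 ∣ x + z`, `x² + 8w² + 7z² = 8M` (`ncard_sol_eight`).

The theorem `2O = 3 N (2M) - N (8M)` is therefore equivalent to `P = E`, which is the heart of the
matter (`ncard_halfSol`).  Let `s = √-7` and `π = (1 + s) / 2`, a prime of norm `2` in the ring of
integers of `ℚ(s)`.  A solution counted by `P` is an `α = (x + z s) / 2`, divisible by the conjugate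
`π'` of `π` but not by `π`, with `N α + 2w² = 2M`; a solution counted by `E` is a
`γ = (X + Z s) / 2` with `8 N γ + y² = M`.
* If `π ∤ γ`, put `α = π' ^ 4 γ` and `w = y`; this reaches exactly the solutions with `w` odd.
* If `π ∣ γ`, write `γ = π (a + b s) / 2`; then `M = y² + 4a² + 28b²`, and exchanging the roles of
  the squares `y²` and `4a²` one puts `α = π' (y + 2b s)`, `w = 2a`; this reaches exactly the
  solutions with `w` even.
-/

/-- Number of representations of `n` as `a*x^2 + b*y^2 + c*z^2` with `x,y,z : ℤ`. -/
noncomputable def N (a b c n : ℕ) : ℕ :=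
  Nat.card {p : ℤ × ℤ × ℤ //
    (a : ℤ) * p.1 ^ 2 + (b : ℤ) * p.2.1 ^ 2 + (c : ℤ) * p.2.2 ^ 2 = (n : ℤ)}

/-- Number of representations of `n` as `a*x(x+1)/2 + b*y(y+1)/2 + c*z(z+1)/2` with `x,y,z : ℕ`. -/
noncomputable def T (a b c n : ℕ) : ℕ :=
  Nat.card {p : ℕ × ℕ × ℕ //
    a * (p.1 * (p.1 + 1) / 2) + b * (p.2.1 * (p.2.1 + 1) / 2)
      + c * (p.2.2 * (p.2.2 + 1) / 2) = n}

/-- Integer solutions of `x² + 2y² + 7z² = k`. -/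
def sol (k : ℤ) : Set (ℤ × ℤ × ℤ) :=
  {p | p.1 ^ 2 + 2 * p.2.1 ^ 2 + 7 * p.2.2 ^ 2 = k}

/-- Solutions of `x² + 2y² + 7z² = k` with all entries odd. -/
def oddSol (k : ℤ) : Set (ℤ × ℤ × ℤ) :=
  {p | p ∈ sol k ∧ p.1 % 2 = 1 ∧ p.2.1 % 2 = 1 ∧ p.2.2 % 2 = 1}

/-- Solutions `(x, y, z)` of `2x² + y² + 14z² = M`. -/
def evenSol (M : ℤ) : Set (ℤ × ℤ × ℤ) :=
  {p | 2 * p.1 ^ 2 + p.2.1 ^ 2 + 14 * p.2.2 ^ 2 = M}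

/-- Solutions `(x, w, z)` of `x² + 8w² + 7z² = 8M` with `x, z` odd and `4 ∣ x + z`. -/
def halfSol (M : ℤ) : Set (ℤ × ℤ × ℤ) :=
  {p | p.1 ^ 2 + 8 * p.2.1 ^ 2 + 7 * p.2.2 ^ 2 = 8 * M ∧ p.1 % 2 = 1 ∧ p.2.2 % 2 = 1 ∧
    (p.1 + p.2.2) % 4 = 0}

theorem finite_sol (k : ℤ) : (sol k).Finite := by
  apply (Set.finite_Icc ((-k, -k, -k) : ℤ × ℤ × ℤ) (k, k, k)).subset
  rintro ⟨x, y, z⟩ h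
  simp only [sol, Set.mem_ofPred_eq] at h
  have sq : ∀ a : ℤ, a ≤ a ^ 2 ∧ -a ≤ a ^ 2 := fun a =>
    ⟨Int.le_self_sq a, by simpa using Int.le_self_sq (-a)⟩
  have hx := sq x
  have hy := sq y
  have hz := sq z
  have := sq_nonneg x
  have := sq_nonneg y
  have := sq_nonneg z
  simp only [Set.mem_Icc, Prod.mk_le_mk]
  refine ⟨⟨?_, ?_, ?_⟩, ?_, ?_, ?_⟩ <;> linarith

theorem N_eq_ncard (k : ℕ) : N 1 2 7 k = (sol k).ncard := by
  have h : sol k = {p : ℤ × ℤ × ℤ | ((1 : ℕ) : ℤ) * p.1 ^ 2 + ((2 : ℕ) : ℤ) * p.2.1 ^ 2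
      + ((7 : ℕ) : ℤ) * p.2.2 ^ 2 = (k : ℤ)} := by
    simp [sol]
  rw [h]
  rfl

/-- The odd integer `±(2k + 1)`, the Boolean being the sign. -/
def oddInt (k : ℕ) (b : Bool) : ℤ := if b then 2 * k + 1 else -(2 * k + 1)

theorem oddInt_inj {k l : ℕ} {b c : Bool} (h : oddInt k b = oddInt l c) : k = l ∧ b = c := by
  cases b <;> cases c <;> simp [oddInt] at h ⊢ <;> omega

theorem exists_oddInt {x : ℤ} (h : x % 2 = 1) : ∃ k b, oddInt k b = x := by
  rcases le_or_gt 0 x with hx | hx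
  · exact ⟨(x / 2).toNat, true, by simp [oddInt]; omega⟩
  · exact ⟨((-x) / 2).toNat, false, by simp [oddInt]; omega⟩

theorem oddInt_emod (k : ℕ) (b : Bool) : oddInt k b % 2 = 1 := by
  cases b <;> simp only [oddInt, if_true, Bool.false_eq_true, if_false] <;> omega

theorem oddInt_sq (k : ℕ) (b : Bool) :
    oddInt k b ^ 2 = 8 * ((k * (k + 1) / 2 : ℕ) : ℤ) + 1 := by
  have h : 2 * (k * (k + 1) / 2) = k * (k + 1) :=
    Nat.mul_div_cancel' (Nat.even_mul_succ_self k).two_dvd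
  have h' : 2 * ((k * (k + 1) / 2 : ℕ) : ℤ) = k * (k + 1) := by exact_mod_cast h
  cases b <;> simp only [oddInt, if_true, Bool.false_eq_true, if_false] <;> linarith

theorem ncard_oddSol (n : ℕ) : (oddSol (8 * n + 10)).ncard = 8 * T 1 2 7 n := by
  let A : Set (ℕ × ℕ × ℕ) := {p | 1 * (p.1 * (p.1 + 1) / 2) + 2 * (p.2.1 * (p.2.1 + 1) / 2)
      + 7 * (p.2.2 * (p.2.2 + 1) / 2) = n}
  let g : (ℕ × ℕ × ℕ) × (Bool × Bool × Bool) → ℤ × ℤ × ℤ :=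
    fun q => (oddInt q.1.1 q.2.1, oddInt q.1.2.1 q.2.2.1, oddInt q.1.2.2 q.2.2.2)
  have hT : T 1 2 7 n = A.ncard := rfl
  have himg : oddSol (8 * n + 10) = g '' (A ×ˢ Set.univ) := by
    have key : ∀ (k l m : ℕ) (b c d : Bool),
        oddInt k b ^ 2 + 2 * oddInt l c ^ 2 + 7 * oddInt m d ^ 2 = 8 * (n : ℤ) + 10 ↔
          1 * (k * (k + 1) / 2) + 2 * (l * (l + 1) / 2) + 7 * (m * (m + 1) / 2) = n := by
      intro k l m b c d
      rw [oddInt_sq, oddInt_sq, oddInt_sq]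
      omega
    ext ⟨x, y, z⟩
    constructor
    · rintro ⟨h, hx, hy, hz⟩
      obtain ⟨k, b, rfl⟩ := exists_oddInt hx
      obtain ⟨l, c, rfl⟩ := exists_oddInt hy
      obtain ⟨m, d, rfl⟩ := exists_oddInt hz
      exact ⟨((k, l, m), (b, c, d)), ⟨(key k l m b c d).1 h, trivial⟩, rfl⟩
    · rintro ⟨⟨⟨k, l, m⟩, ⟨b, c, d⟩⟩, ⟨h, -⟩, he⟩
      rw [← he]
      exact ⟨(key k l m b c d).2 h, oddInt_emod _ _, oddInt_emod _ _, oddInt_emod _ _⟩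
  have hinj : Function.Injective g := by
    rintro ⟨⟨k, l, m⟩, ⟨b, c, d⟩⟩ ⟨⟨k', l', m'⟩, ⟨b', c', d'⟩⟩ h
    simp only [g, Prod.mk.injEq] at h
    obtain ⟨h1, h2, h3⟩ := h
    obtain ⟨rfl, rfl⟩ := oddInt_inj h1
    obtain ⟨rfl, rfl⟩ := oddInt_inj h2
    obtain ⟨rfl, rfl⟩ := oddInt_inj h3
    rfl
  rw [himg, Set.ncard_image_of_injective _ hinj, Set.ncard_prod, hT, Set.ncard_univ]
  simp [mul_comm]

/-- Squares modulo `8`, `16`, `32` according to the class of `x` modulo `4`; with the quotients named,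
congruence arguments on quadratic equations become linear. -/
theorem sq_cases (x : ℤ) : (x % 2 = 1 ∧ ∃ a, x ^ 2 = 8 * a + 1) ∨
    (x % 4 = 0 ∧ ∃ a, x ^ 2 = 16 * a) ∨ (x % 4 = 2 ∧ ∃ a, x ^ 2 = 32 * a + 4) := by
  have h : x % 4 = 0 ∨ x % 4 = 2 ∨ x % 2 = 1 := by omega
  rcases h with h | h | h
  · obtain ⟨c, rfl⟩ : ∃ c, x = 4 * c := ⟨x / 4, by omega⟩
    exact Or.inr (Or.inl ⟨h, c ^ 2, by ring⟩)
  · obtain ⟨c, rfl⟩ : ∃ c, x = 4 * c + 2 := ⟨x / 4, by omega⟩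
    obtain ⟨d, hd⟩ := (Int.even_mul_succ_self c).two_dvd
    exact Or.inr (Or.inr ⟨h, d, by linear_combination 16 * hd⟩)
  · obtain ⟨c, rfl⟩ : ∃ c, x = 2 * c + 1 := ⟨x / 2, by omega⟩
    obtain ⟨d, hd⟩ := (Int.even_mul_succ_self c).two_dvd
    exact Or.inl ⟨h, d, by linear_combination 4 * hd⟩

theorem ncard_sol_two (j : ℤ) : (sol (2 * (8 * j + 9))).ncard =
    (oddSol (2 * (8 * j + 9))).ncard + (evenSol (8 * j + 9)).ncard := by
  let f : ℤ × ℤ × ℤ → ℤ × ℤ × ℤ := fun p => (2 * p.1, p.2.1, 2 * p.2.2)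
  have hf : Function.Injective f := by
    rintro ⟨x, y, z⟩ ⟨x', y', z'⟩ h
    simp only [f, Prod.mk.injEq] at h ⊢
    omega
  have hun : sol (2 * (8 * j + 9)) = oddSol (2 * (8 * j + 9)) ∪ f '' evenSol (8 * j + 9) := by
    ext ⟨x, y, z⟩
    constructor
    · intro h
      have h' := h
      simp only [sol, Set.mem_ofPred_eq] at h'
      by_cases hx : x % 2 = 1
      · left
        refine ⟨h, hx, ?_⟩
        rcases sq_cases x with ⟨_, a, ha⟩ | ⟨_, a, ha⟩ | ⟨_, a, ha⟩ <;>
        rcases sq_cases y with ⟨_, b, hb⟩ | ⟨_, b, hb⟩ | ⟨_, b, hb⟩ <;>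
        rcases sq_cases z with ⟨_, c, hc⟩ | ⟨_, c, hc⟩ | ⟨_, c, hc⟩ <;> dsimp only <;> omega
      · right
        have hz : z % 2 = 0 := by
          rcases sq_cases x with ⟨_, a, ha⟩ | ⟨_, a, ha⟩ | ⟨_, a, ha⟩ <;>
          rcases sq_cases z with ⟨_, c, hc⟩ | ⟨_, c, hc⟩ | ⟨_, c, hc⟩ <;> omega
        obtain ⟨a, rfl⟩ : ∃ a, x = 2 * a := ⟨x / 2, by omega⟩
        obtain ⟨c, rfl⟩ : ∃ c, z = 2 * c := ⟨z / 2, by omega⟩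
        refine ⟨(a, y, c), ?_, rfl⟩
        simp only [evenSol, Set.mem_ofPred_eq]
        linarith
    · rintro (h | ⟨⟨a, b, c⟩, h, he⟩)
      · exact h.1
      · rw [← he]
        simp only [evenSol, Set.mem_ofPred_eq] at h
        simp only [sol, f, Set.mem_ofPred_eq]
        linarith
  have hdis : Disjoint (oddSol (2 * (8 * j + 9))) (f '' evenSol (8 * j + 9)) := by
    rw [Set.disjoint_left]
    rintro ⟨x, y, z⟩ ⟨-, hx, -⟩ ⟨⟨a, b, c⟩, -, he⟩
    simp only [f, Prod.mk.injEq] at he hx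
    omega
  have hfin := finite_sol (2 * (8 * j + 9))
  rw [hun] at hfin
  rw [hun, Set.ncard_union_eq hdis (hfin.subset Set.subset_union_left)
    (hfin.subset Set.subset_union_right), Set.ncard_image_of_injective _ hf]

theorem ncard_sol_eight (M : ℤ) : (sol (8 * M)).ncard =
    (sol (2 * M)).ncard + 2 * (halfSol M).ncard := by
  let f : ℤ × ℤ × ℤ → ℤ × ℤ × ℤ := fun p => (2 * p.1, 2 * p.2.1, 2 * p.2.2)
  let g : ℤ × ℤ × ℤ → ℤ × ℤ × ℤ := fun p => (p.1, 2 * p.2.1, p.2.2)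
  let h : ℤ × ℤ × ℤ → ℤ × ℤ × ℤ := fun p => (p.1, 2 * p.2.1, -p.2.2)
  have hf : Function.Injective f := by
    rintro ⟨x, y, z⟩ ⟨x', y', z'⟩ h
    simp only [f, Prod.mk.injEq] at h ⊢
    omega
  have hg : Function.Injective g := by
    rintro ⟨x, y, z⟩ ⟨x', y', z'⟩ h
    simp only [g, Prod.mk.injEq] at h ⊢
    omega
  have hh : Function.Injective h := by
    rintro ⟨x, y, z⟩ ⟨x', y', z'⟩ he
    simp only [h, Prod.mk.injEq] at he ⊢
    omega
  have hun : sol (8 * M) = f '' sol (2 * M) ∪ (g '' halfSol M ∪ h '' halfSol M) := by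
    ext ⟨x, y, z⟩
    constructor
    · intro hs
      simp only [sol, Set.mem_ofPred_eq] at hs
      have hpar : y % 2 = 0 ∧ x % 2 = z % 2 := by
        rcases sq_cases x with ⟨_, a, ha⟩ | ⟨_, a, ha⟩ | ⟨_, a, ha⟩ <;>
        rcases sq_cases y with ⟨_, b, hb⟩ | ⟨_, b, hb⟩ | ⟨_, b, hb⟩ <;>
        rcases sq_cases z with ⟨_, c, hc⟩ | ⟨_, c, hc⟩ | ⟨_, c, hc⟩ <;> omega
      obtain ⟨hy, hxz⟩ := hpar
      obtain ⟨b, rfl⟩ : ∃ b, y = 2 * b := ⟨y / 2, by omega⟩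
      by_cases hx : x % 2 = 1
      · right
        by_cases h4 : (x + z) % 4 = 0
        · left
          refine ⟨(x, b, z), ⟨?_, hx, ?_, h4⟩, rfl⟩ <;> dsimp only
          · linarith
          · omega
        · right
          refine ⟨(x, b, -z), ⟨?_, hx, ?_, ?_⟩, ?_⟩
          · dsimp only
            linarith [neg_sq z]
          · dsimp only
            omega
          · dsimp only
            omega
          · simp [h]
      · left
        obtain ⟨a, rfl⟩ : ∃ a, x = 2 * a := ⟨x / 2, by omega⟩
        obtain ⟨c, rfl⟩ : ∃ c, z = 2 * c := ⟨z / 2, by omega⟩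
        refine ⟨(a, b, c), ?_, rfl⟩
        simp only [sol, Set.mem_ofPred_eq]
        linarith
    · rintro (⟨⟨a, b, c⟩, hs, he⟩ | ⟨⟨a, b, c⟩, ⟨hs, -⟩, he⟩ | ⟨⟨a, b, c⟩, ⟨hs, -⟩, he⟩)
      · rw [← he]
        simp only [sol, f, Set.mem_ofPred_eq] at hs ⊢
        linarith
      · rw [← he]
        simp only [sol, g, Set.mem_ofPred_eq] at hs ⊢
        linarith
      · rw [← he]
        simp only [sol, h, Set.mem_ofPred_eq] at hs ⊢
        linarith [neg_sq c]
  have hd1 : Disjoint (f '' sol (2 * M)) (g '' halfSol M ∪ h '' halfSol M) := by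
    rw [Set.disjoint_left]
    rintro ⟨x, y, z⟩ ⟨⟨a, b, c⟩, -, he⟩
      (⟨⟨a', b', c'⟩, ⟨-, hx, -⟩, he'⟩ | ⟨⟨a', b', c'⟩, ⟨-, hx, -⟩, he'⟩) <;>
    · simp only [f, g, h, Prod.mk.injEq] at he he' hx
      omega
  have hd2 : Disjoint (g '' halfSol M) (h '' halfSol M) := by
    rw [Set.disjoint_left]
    rintro ⟨x, y, z⟩ ⟨⟨a, b, c⟩, ⟨-, ha, hc, h4⟩, he⟩ ⟨⟨a', b', c'⟩, ⟨-, ha', hc', h4'⟩, he'⟩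
    simp only [g, h, Prod.mk.injEq] at he he' ha hc h4 ha' hc' h4'
    omega
  have hfin := finite_sol (8 * M)
  rw [hun] at hfin
  have hfin2 := hfin.subset Set.subset_union_right
  rw [hun, Set.ncard_union_eq hd1 (hfin.subset Set.subset_union_left) hfin2,
    Set.ncard_union_eq hd2 (hfin2.subset Set.subset_union_left)
    (hfin2.subset Set.subset_union_right), Set.ncard_image_of_injective _ hf,
    Set.ncard_image_of_injective _ hg, Set.ncard_image_of_injective _ hh]
  ring

/-- The correspondence `γ ↦ α` between solutions of `8 N γ + y² = M` and of `N α + 2w² = 2M`.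
In coordinates, `π ∣ γ` means `X ≡ Z` modulo `4`. -/
def toHalf (p : ℤ × ℤ × ℤ) : ℤ × ℤ × ℤ :=
  if (p.1 - p.2.2) % 4 = 0 then
    (p.2.1 + 7 * ((p.2.2 - p.1) / 2), (p.1 + 7 * p.2.2) / 2, (p.2.2 - p.1) / 2 - p.2.1)
  else ((p.1 - 21 * p.2.2) / 2, p.2.1, (3 * p.1 + p.2.2) / 2)

/-- The right-hand side being `1` modulo `8` makes `y` odd and `x, z` of equal parity, so that
`(x + z √-7) / 2` is an algebraic integer. -/
theorem evenSol_parity {j x y z : ℤ} (h : 2 * x ^ 2 + y ^ 2 + 14 * z ^ 2 = 8 * j + 9) :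
    y % 2 = 1 ∧ (x - z) % 2 = 0 := by
  rcases sq_cases x with ⟨_, a, ha⟩ | ⟨_, a, ha⟩ | ⟨_, a, ha⟩ <;>
  rcases sq_cases y with ⟨_, b, hb⟩ | ⟨_, b, hb⟩ | ⟨_, b, hb⟩ <;>
  rcases sq_cases z with ⟨_, c, hc⟩ | ⟨_, c, hc⟩ | ⟨_, c, hc⟩ <;> omega

theorem toHalf_mem {j : ℤ} {p : ℤ × ℤ × ℤ} (hp : p ∈ evenSol (8 * j + 9)) :
    toHalf p ∈ halfSol (8 * j + 9) := by
  obtain ⟨x, y, z⟩ := p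
  simp only [evenSol, Set.mem_ofPred_eq] at hp
  obtain ⟨hy, hxz⟩ := evenSol_parity hp
  simp only [toHalf]
  split_ifs with h4
  · obtain ⟨b, rfl⟩ : ∃ b, z = x + 4 * b := ⟨(z - x) / 4, by omega⟩
    have e1 : (x + 4 * b - x) / 2 = 2 * b := by omega
    have e2 : (x + 7 * (x + 4 * b)) / 2 = 4 * x + 14 * b := by omega
    rw [e1, e2]
    refine ⟨?_, ?_, ?_, ?_⟩ <;> dsimp only
    · linear_combination 8 * hp
    all_goals omega
  · obtain ⟨b, rfl⟩ : ∃ b, x = z + 4 * b + 2 := ⟨(x - z) / 4, by omega⟩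
    have e1 : (z + 4 * b + 2 - 21 * z) / 2 = -10 * z + 2 * b + 1 := by omega
    have e2 : (3 * (z + 4 * b + 2) + z) / 2 = 2 * z + 6 * b + 3 := by omega
    rw [e1, e2]
    refine ⟨?_, ?_, ?_, ?_⟩ <;> dsimp only
    · linear_combination 8 * hp
    all_goals omega

theorem toHalf_injOn (j : ℤ) : Set.InjOn toHalf (evenSol (8 * j + 9)) := by
  rintro ⟨x, y, z⟩ hp ⟨x', y', z'⟩ hp' h
  simp only [evenSol, Set.mem_ofPred_eq] at hp hp'
  obtain ⟨hy, hxz⟩ := evenSol_parity hp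
  obtain ⟨hy', hxz'⟩ := evenSol_parity hp'
  simp only [toHalf] at h
  split_ifs at h <;> simp only [Prod.mk.injEq] at h ⊢ <;> omega

theorem toHalf_surjOn (j : ℤ) :
    Set.SurjOn toHalf (evenSol (8 * j + 9)) (halfSol (8 * j + 9)) := by
  rintro ⟨x, w, z⟩ ⟨h, hx, hz, h4⟩
  dsimp only at h hx hz h4
  obtain ⟨k, rfl⟩ : ∃ k, x = 4 * k - z := ⟨(x + z) / 4, by omega⟩
  have hk : 2 * k ^ 2 - k * z + z ^ 2 + w ^ 2 = 8 * j + 9 := by linarith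
  rcases Int.emod_two_eq_zero_or_one w with hw | hw
  · -- `w` even: then `N α / 2` is odd, which forces `k = 2t`.
    have hkz : Even (k * z) := by
      obtain ⟨a, rfl⟩ : ∃ a, w = 2 * a := ⟨w / 2, by omega⟩
      obtain ⟨b, rfl⟩ : ∃ b, z = 2 * b + 1 := ⟨z / 2, by omega⟩
      exact ⟨k ^ 2 + 2 * b ^ 2 + 2 * b + 2 * a ^ 2 - 4 * j - 4, by linarith⟩
    have hke : k % 2 = 0 := by
      rcases Int.even_mul.1 hkz with h1 | h1
      · exact Int.even_iff.1 h1
      · have := Int.even_iff.1 h1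
        omega
    obtain ⟨t, rfl⟩ : ∃ t, k = 2 * t := ⟨k / 2, by omega⟩
    have hk' : (t - z) ^ 2 + 7 * t ^ 2 + w ^ 2 = 8 * j + 9 := by linarith
    have ht : t % 2 = 0 ∧ (w + t) % 4 = 0 := by
      rcases sq_cases (t - z) with ⟨_, a, ha⟩ | ⟨_, a, ha⟩ | ⟨_, a, ha⟩ <;>
      rcases sq_cases t with ⟨_, b, hb⟩ | ⟨_, b, hb⟩ | ⟨_, b, hb⟩ <;>
      rcases sq_cases w with ⟨_, c, hc⟩ | ⟨_, c, hc⟩ | ⟨_, c, hc⟩ <;> omega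
    obtain ⟨c, hc⟩ : ∃ c, w = 4 * c - t := ⟨(w + t) / 4, by omega⟩
    subst hc
    refine ⟨(c - 2 * t, t - z, c), ?_, ?_⟩
    · simp only [evenSol, Set.mem_ofPred_eq]
      linear_combination hk'
    · simp only [toHalf]
      rw [if_pos (by omega)]
      simp only [Prod.mk.injEq]
      omega
  · -- `w` odd: then `8 ∣ N α / 2 = 2k² - kz + z²`, and modulo `8` this is `(k + 5z)(2k - 11z)`
    -- with the second factor odd.
    have hdvd : (8 : ℤ) ∣ (2 * k - 11 * z) * (k + 5 * z) := by
      rcases sq_cases w with ⟨_, a, ha⟩ | ⟨_, a, ha⟩ | ⟨_, a, ha⟩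
      · exact ⟨j + 1 - a - 7 * z ^ 2, by linear_combination hk - ha⟩
      all_goals omega
    have hcop : IsCoprime (8 : ℤ) (2 * k - 11 * z) := by
      have : IsCoprime (2 : ℤ) (2 * k - 11 * z) :=
        ⟨-(k - 11 * z / 2 - 1), 1, by omega⟩
      have h3 := this.pow_left (m := 3)
      norm_num at h3
      exact h3
    obtain ⟨c, hc⟩ := hcop.dvd_of_dvd_mul_left hdvd
    obtain rfl : k = 8 * c - 5 * z := by linarith
    refine ⟨(c, w, 2 * z - 3 * c), ?_, ?_⟩
    · simp only [evenSol, Set.mem_ofPred_eq]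
      linear_combination hk
    · simp only [toHalf]
      rw [if_neg (by omega)]
      simp only [Prod.mk.injEq, true_and]
      omega

theorem ncard_halfSol (j : ℤ) : (halfSol (8 * j + 9)).ncard = (evenSol (8 * j + 9)).ncard := by
  rw [← Set.BijOn.image_eq ⟨fun _ => toHalf_mem, toHalf_injOn j, toHalf_surjOn j⟩,
    (toHalf_injOn j).ncard_image]

theorem stmt_17 (n : ℕ) (hn : 0 < n) (hpar : Odd n) :
    (16 * T 1 2 7 n : ℤ) = 3 * (N 1 2 7 (8 * n + 10) : ℤ) - (N 1 2 7 (4 * (8 * n + 10)) : ℤ) := by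
  obtain ⟨j, rfl⟩ := hpar
  have h1 := ncard_oddSol (2 * j + 1)
  have h2 := ncard_sol_two j
  have h3 := ncard_sol_eight (8 * j + 9)
  have h4 := ncard_halfSol j
  have e1 : (8 * ((2 * j + 1 : ℕ) : ℤ) + 10) = 2 * (8 * j + 9) := by push_cast; ring
  have e2 : (((8 * (2 * j + 1) + 10 : ℕ)) : ℤ) = 2 * (8 * j + 9) := by push_cast; ring
  have e3 : (((4 * (8 * (2 * j + 1) + 10) : ℕ)) : ℤ) = 8 * (8 * j + 9) := by push_cast; ring
  rw [e1] at h1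
  rw [N_eq_ncard, N_eq_ncard, e2, e3]
  omega
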